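/- arXiv:2006.15076 — 2 statements merged into one kernel-verified Lean document; each statement's English description precedes it below -/
import Mathlib

section
/- Let G be a G-metric on a nonempty set X, let X_1,…,X_m be nonempty subsets of X, and let T : ∪_{i=1}^m X_i → ∪_{i=1}^m X_i be a cyclical operator. Write D(x,y) = G(x,y,y) + G(y,x,x). Suppose T is a G-Mohsenialhosseini cyclical operator: there exist α, β, γ ∈ [0,1/2) such that for all x ∈ X_i and y ∈ X_{i+1} (indices mod m) at least one of the following holds: (i) D(Tx,Ty) ≤ α·(D(x,y) + D(Tx,Ty)); (ii) D(Tx,Ty) ≤ β·(D(x,Tx) + D(y,Ty)); (iii) D(Tx,Ty) ≤ γ·(D(x,Ty) + D(y,Tx)). Set η = max{α/(1−α), β/(1−β), γ/(1−γ)}. Then for every ε > 0 and all x, y ∈ F_ε^G(T), one has D(x,y) ≤ 2ε(1+η)/(1−η). -/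
open Filter Set

/-- A G-metric on a set `X`. -/
structure IsGMetric {X : Type*} (G : X → X → X → ℝ) : Prop where
  eq_iff : ∀ x y z, G x y z = 0 ↔ x = y ∧ y = z
  pos : ∀ x y, x ≠ y → 0 < G x x y
  mono : ∀ x y z, z ≠ y → G x x y ≤ G x y z
  symm_swap : ∀ x y z, G x y z = G x z y
  symm_cycle : ∀ x y z, G x y z = G y z x
  rect : ∀ x y z a, G x y z ≤ G x a a + G a y z

/-- `D(x,y) = G(x,y,y) + G(y,x,x)`. -/
def gD {X : Type*} (G : X → X → X → ℝ) (x y : X) : ℝ :=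
  G x y y + G y x x

/-- `T` is a cyclical operator with respect to the family of sets `A`. -/
def IsCyclical {X : Type*} {m : ℕ} [NeZero m] (A : Fin m → Set X) (T : X → X) : Prop :=
  ∀ i : Fin m, Set.MapsTo T (A i) (A (i + 1))

/-!
Since `D` is a metric, the argument takes place in a pseudometric space. Put `c = max α β γ` and
`η = c / (1 - c)`. Whenever `x ∈ A i` and `y ∈ A (i + 1)`, the contraction condition gives
`(1 - η) d(x, y) ≤ d(x, Tx) + d(y, Ty)`, and for `y = Tx` it gives `d(Tx, T²x) ≤ η d(x, Tx)`.
By the second estimate, the first one holds for `(x, y)` as soon as it holds for `(x, Ty)`;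
going backwards around the cycle of sets, it therefore holds for `y` in any of them.
-/

/-- The metric `D` of a G-metric, `D(x, y) = G(x, y, y) + G(y, x, x)`, as a `MetricSpace`
structure. It is not an instance because it depends on `G`. -/
abbrev IsGMetric.toMetricSpace {X : Type*} {G : X → X → X → ℝ} (hG : IsGMetric G) :
    MetricSpace X where
  dist := gD G
  dist_self x := by simp [gD, (hG.eq_iff x x x).2 ⟨rfl, rfl⟩]
  dist_comm x y := add_comm _ _
  dist_triangle x y z := by
    unfold gD
    linarith [hG.rect x z z y, hG.rect z x x y]
  eq_of_dist_eq_zero {x y} h := by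
    by_contra hxy
    change G x y y + G y x x = 0 at h
    rw [hG.symm_cycle x y y, hG.symm_cycle y x x] at h
    linarith [hG.pos x y hxy, hG.pos y x (Ne.symm hxy)]

section Ratio

variable {a b c s t : ℝ}

lemma le_div_one_sub_mul_of_le_mul_add (ha : a < 1) (h : t ≤ a * (s + t)) :
    t ≤ a / (1 - a) * s := by
  rw [div_mul_eq_mul_div, le_div_iff₀ (sub_pos.2 ha)]
  linarith

lemma div_one_sub_mem_Ico (ha : a ∈ Ico (0 : ℝ) (1 / 2)) : a / (1 - a) ∈ Ico (0 : ℝ) 1 := by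
  have h_pos : 0 < 1 - a := by linarith [ha.2]
  exact ⟨div_nonneg ha.1 h_pos.le, (div_lt_one h_pos).2 (by linarith [ha.2])⟩

lemma monotoneOn_div_one_sub : MonotoneOn (fun a : ℝ ↦ a / (1 - a)) (Iio 1) := by
  intro a ha b hb hab
  rw [div_le_div_iff₀ (sub_pos.2 ha) (sub_pos.2 hb)]
  linarith

lemma max_div_one_sub (ha : a < 1) (hb : b < 1) (hc : c < 1) :
    max (a / (1 - a)) (max (b / (1 - b)) (c / (1 - c))) =
      max a (max b c) / (1 - max a (max b c)) := by
  rw [← monotoneOn_div_one_sub.map_max hb hc, ← monotoneOn_div_one_sub.map_max ha (max_lt hb hc)]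

end Ratio

lemma forall_fin_of_add_one {m : ℕ} [NeZero m] {P : Fin m → Prop} {i : Fin m} (hi : P i)
    (step : ∀ j, P (j + 1) → P j) (j : Fin m) : P j := by
  have backwards (n : ℕ) : P (i - Fin.ofNat m n) := by
    induction n with
    | zero => simpa using hi
    | succ n ih =>
      apply step
      have h_succ : Fin.ofNat m (n + 1) = Fin.ofNat m n + 1 := by
        ext; simp [Fin.val_add]
      rwa [h_succ, sub_add_eq_sub_sub, sub_add_cancel]
  simpa using backwards (i - j).val

section Contraction

variable {X : Type*} [PseudoMetricSpace X] {T : X → X} {c : ℝ} {x y : X}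

/-- The Mohsenialhosseini contraction condition for the pair `(x, y)`. The alternatives (i), (ii),
(iii) with constants `α, β, γ ≥ 0` are merged into one inequality, with `c = max α β γ`. -/
def IsMohsenialhosseiniPair (T : X → X) (c : ℝ) (x y : X) : Prop :=
  dist (T x) (T y) ≤ c * max (dist x y + dist (T x) (T y))
    (max (dist x (T x) + dist y (T y)) (dist x (T y) + dist y (T x)))

lemma isMohsenialhosseiniPair_of_or {α β γ : ℝ} (hα : 0 ≤ α)
    (h : dist (T x) (T y) ≤ α * (dist x y + dist (T x) (T y)) ∨
      dist (T x) (T y) ≤ β * (dist x (T x) + dist y (T y)) ∨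
      dist (T x) (T y) ≤ γ * (dist x (T y) + dist y (T x))) :
    IsMohsenialhosseiniPair T (max α (max β γ)) x y := by
  have h_nonneg : 0 ≤ max α (max β γ) := le_max_of_le_left hα
  rcases h with h | h | h <;> refine h.trans (mul_le_mul ?_ ?_ (by positivity) h_nonneg) <;> simp

namespace IsMohsenialhosseiniPair

lemma dist_map_le {s : ℝ} (h : IsMohsenialhosseiniPair T c x y) (hc : c ∈ Ico (0 : ℝ) 1)
    (h_dist : dist x y ≤ s)
    (h_displacement : dist x (T x) + dist y (T y) ≤ s + dist (T x) (T y))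
    (h_cross : dist x (T y) + dist y (T x) ≤ s + dist (T x) (T y)) :
    dist (T x) (T y) ≤ c / (1 - c) * s :=
  le_div_one_sub_mul_of_le_mul_add hc.2 <| h.trans <| mul_le_mul_of_nonneg_left
    (max_le (add_le_add_left h_dist _) (max_le h_displacement h_cross)) hc.1

lemma dist_map_map_le (h : IsMohsenialhosseiniPair T c x (T x)) (hc : c ∈ Ico (0 : ℝ) 1) :
    dist (T x) (T (T x)) ≤ c / (1 - c) * dist x (T x) :=
  h.dist_map_le hc le_rfl le_rfl <| by
    simpa only [dist_self, add_zero] using dist_triangle x (T x) (T (T x))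

lemma one_sub_mul_dist_le (h : IsMohsenialhosseiniPair T c x y) (hc : c ∈ Ico (0 : ℝ) (1 / 2)) :
    (1 - c / (1 - c)) * dist x y ≤ dist x (T x) + dist y (T y) := by
  have h_dist : dist x y ≤ dist x (T x) + dist y (T y) + dist (T x) (T y) := by
    linarith [dist_triangle4 x (T x) (T y) y, dist_comm (T y) y]
  have h_map : dist (T x) (T y) ≤
      c / (1 - c) * (dist x (T x) + dist y (T y) + dist (T x) (T y)) := by
    refine h.dist_map_le ⟨hc.1, hc.2.trans one_half_lt_one⟩ h_dist ?_ ?_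
    · linarith [dist_nonneg (x := T x) (y := T y)]
    · linarith [dist_triangle x (T x) (T y), dist_triangle y (T y) (T x), dist_comm (T x) (T y)]
  have h_ratio : 0 ≤ 1 - c / (1 - c) := sub_nonneg.2 (div_one_sub_mem_Ico hc).2.le
  linarith [mul_le_mul_of_nonneg_left h_dist h_ratio]

end IsMohsenialhosseiniPair

lemma one_sub_mul_dist_le_of_map {k e : ℝ} (hk : k ≤ 1)
    (h_contr : dist (T y) (T (T y)) ≤ k * dist y (T y))
    (h : (1 - k) * dist x (T y) ≤ e + dist (T y) (T (T y))) :
    (1 - k) * dist x y ≤ e + dist y (T y) :=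
  calc (1 - k) * dist x y
      ≤ (1 - k) * (dist x (T y) + dist y (T y)) :=
        mul_le_mul_of_nonneg_left (dist_triangle_right x y (T y)) (sub_nonneg.2 hk)
    _ = (1 - k) * dist x (T y) + (1 - k) * dist y (T y) := mul_add _ _ _
    _ ≤ e + k * dist y (T y) + (1 - k) * dist y (T y) := by gcongr; linarith
    _ = e + dist y (T y) := by ring

variable {m : ℕ} [NeZero m] {A : Fin m → Set X}

lemma IsCyclical.dist_le_div_one_sub (hT : IsCyclical A T) (hc : c ∈ Ico (0 : ℝ) (1 / 2))
    (hcontr : ∀ i, ∀ x ∈ A i, ∀ y ∈ A (i + 1), IsMohsenialhosseiniPair T c x y)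
    (hx : x ∈ ⋃ i, A i) (hy : y ∈ ⋃ i, A i) :
    dist x y ≤ (dist x (T x) + dist y (T y)) / (1 - c / (1 - c)) := by
  obtain ⟨i, hxi⟩ := mem_iUnion.1 hx
  obtain ⟨j, hyj⟩ := mem_iUnion.1 hy
  have h_ratio : c / (1 - c) < 1 := (div_one_sub_mem_Ico hc).2
  suffices ∀ j, ∀ y ∈ A j, (1 - c / (1 - c)) * dist x y ≤ dist x (T x) + dist y (T y) by
    rw [le_div_iff₀' (sub_pos.2 h_ratio)]
    exact this j y hyj
  refine forall_fin_of_add_one (i := i + 1)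
    (fun y hy ↦ (hcontr i x hxi y hy).one_sub_mul_dist_le hc) fun j ih y hy ↦ ?_
  have h_contr : dist (T y) (T (T y)) ≤ c / (1 - c) * dist y (T y) :=
    (hcontr j y hy (T y) (hT j hy)).dist_map_map_le ⟨hc.1, hc.2.trans one_half_lt_one⟩
  exact one_sub_mul_dist_le_of_map h_ratio.le h_contr (ih (T y) (hT j hy))

theorem stmt_10_general {α β γ : ℝ} (hT : IsCyclical A T)
    (hα : α ∈ Ico (0 : ℝ) (1 / 2)) (hβ : β ∈ Ico (0 : ℝ) (1 / 2)) (hγ : γ ∈ Ico (0 : ℝ) (1 / 2))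
    (hcontr : ∀ i, ∀ x ∈ A i, ∀ y ∈ A (i + 1),
      dist (T x) (T y) ≤ α * (dist x y + dist (T x) (T y)) ∨
      dist (T x) (T y) ≤ β * (dist x (T x) + dist y (T y)) ∨
      dist (T x) (T y) ≤ γ * (dist x (T y) + dist y (T x)))
    (hx : x ∈ ⋃ i, A i) (hy : y ∈ ⋃ i, A i) :
    dist x y ≤ (dist x (T x) + dist y (T y)) /
      (1 - max (α / (1 - α)) (max (β / (1 - β)) (γ / (1 - γ)))) := by
  rw [max_div_one_sub (hα.2.trans one_half_lt_one) (hβ.2.trans one_half_lt_one)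
    (hγ.2.trans one_half_lt_one)]
  exact hT.dist_le_div_one_sub (max_rec' (· ∈ Ico _ _) hα (max_rec' (· ∈ Ico _ _) hβ hγ))
    (fun i x hx y hy ↦ isMohsenialhosseiniPair_of_or hα.1 (hcontr i x hx y hy)) hx hy

end Contraction

lemma add_div_one_sub_le {k a b ε : ℝ} (hk : k ∈ Ico (0 : ℝ) 1) (hε : 0 ≤ ε) (ha : a ≤ ε)
    (hb : b ≤ ε) : (a + b) / (1 - k) ≤ 2 * ε * (1 + k) / (1 - k) :=
  div_le_div_of_nonneg_right (by linarith [mul_nonneg hε hk.1]) (sub_nonneg.2 hk.2.le)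

/-- For a G-Mohsenialhosseini cyclical operator with
`η = max{α/(1−α), β/(1−β), γ/(1−γ)}`, any two `ε`-fixed points `x, y` satisfy
`D(x,y) ≤ 2ε(1+η)/(1−η)`. -/
theorem stmt_10 {X : Type*} [Nonempty X] {m : ℕ} [NeZero m]
    (G : X → X → X → ℝ) (hG : IsGMetric G)
    (A : Fin m → Set X) (hA : ∀ i, (A i).Nonempty)
    (T : X → X) (hT : IsCyclical A T)
    (α β γ : ℝ)
    (hα : α ∈ Set.Ico (0 : ℝ) (1/2)) (hβ : β ∈ Set.Ico (0 : ℝ) (1/2))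
    (hγ : γ ∈ Set.Ico (0 : ℝ) (1/2))
    (hcontr : ∀ i : Fin m, ∀ x ∈ A i, ∀ y ∈ A (i + 1),
      gD G (T x) (T y) ≤ α * (gD G x y + gD G (T x) (T y)) ∨
      gD G (T x) (T y) ≤ β * (gD G x (T x) + gD G y (T y)) ∨
      gD G (T x) (T y) ≤ γ * (gD G x (T y) + gD G y (T x))) :
    ∀ ε > 0, ∀ x ∈ {x ∈ ⋃ i, A i | gD G x (T x) < ε},
      ∀ y ∈ {x ∈ ⋃ i, A i | gD G x (T x) < ε},
      gD G x y ≤ 2 * ε * (1 + max (α / (1 - α)) (max (β / (1 - β)) (γ / (1 - γ)))) /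
        (1 - max (α / (1 - α)) (max (β / (1 - β)) (γ / (1 - γ)))) := by
  intro ε hε x ⟨hx, hxε⟩ y ⟨hy, hyε⟩
  let := hG.toMetricSpace
  have h_ratio : max (α / (1 - α)) (max (β / (1 - β)) (γ / (1 - γ))) ∈ Ico (0 : ℝ) 1 :=
    max_rec' (· ∈ Ico _ _) (div_one_sub_mem_Ico hα)
      (max_rec' (· ∈ Ico _ _) (div_one_sub_mem_Ico hβ) (div_one_sub_mem_Ico hγ))
  exact (stmt_10_general hT hα hβ hγ hcontr hx hy).trans
    (add_div_one_sub_le h_ratio hε.le hxε.le hyε.le)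
end

section
/- Let G be a G-metric on a nonempty set X and write D(x,y) = G(x,y,y) + G(y,x,x). Let T : X → X and suppose there exist α, β, γ ∈ [0,1/2) such that for all x, y ∈ X at least one of the following holds: (i) D(Tx,Ty) ≤ α·(D(x,y) + D(Tx,Ty)); (ii) D(Tx,Ty) ≤ β·(D(x,Tx) + D(y,Ty)); (iii) D(Tx,Ty) ≤ γ·(D(x,Ty) + D(y,Tx)). Set η = max{α/(1−α), β/(1−β), γ/(1−γ)}. Then for all x, y ∈ X both D(Tx,Ty) ≤ 2η·D(x,Tx) + η·D(x,y) and D(Tx,Ty) ≤ 2η·D(y,Ty) + η·D(x,y) hold. -/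
open Filter Set

/-!
The argument is one about metrics. Put `S = 2 d(x, Tx) + d(x, y)`. By the triangle inequality, each
of `d(x, y) + d(Tx, Ty)`, `d(x, Tx) + d(y, Ty)` and `d(x, Ty) + d(y, Tx)` is at most
`S + d(Tx, Ty)`. So each alternative gives `d(Tx, Ty) ≤ t (S + d(Tx, Ty))` for some `t < 1`, and
solving for `d(Tx, Ty)` gives `d(Tx, Ty) ≤ t / (1 - t) S`. The alternatives are symmetric in `x`
and `y`, which gives the second bound.
-/

lemma gD_comm {X : Type*} (G : X → X → X → ℝ) (x y : X) : gD G x y = gD G y x :=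
  add_comm _ _

namespace IsGMetric

variable {X : Type*} {G : X → X → X → ℝ}

lemma gD_self (hG : IsGMetric G) (x : X) : gD G x x = 0 := by
  simp [gD, (hG.eq_iff x x x).2 ⟨rfl, rfl⟩]

lemma gD_triangle (hG : IsGMetric G) (x y z : X) : gD G x z ≤ gD G x y + gD G y z := by
  unfold gD
  linarith [hG.rect x z z y, hG.rect z x x y]

lemma gD_pos (hG : IsGMetric G) {x y : X} (hxy : x ≠ y) : 0 < gD G x y := by
  unfold gD
  rw [hG.symm_cycle x y y, hG.symm_cycle y x x]
  exact add_pos (hG.pos y x hxy.symm) (hG.pos x y hxy)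

/-- The metric space structure on `X` whose distance is `D = gD G`. It is not an instance, as it
depends on the choice of the G-metric `G`. -/
abbrev metricSpace (hG : IsGMetric G) : MetricSpace X where
  dist := gD G
  dist_self := hG.gD_self
  dist_comm := gD_comm G
  dist_triangle := hG.gD_triangle
  eq_of_dist_eq_zero h := by_contra fun hxy => (hG.gD_pos hxy).ne' h

end IsGMetric

lemma le_div_one_sub_mul_of_le_mul_add_s18 {K : Type*} [Field K] [LinearOrder K]
    [IsStrictOrderedRing K] {t d s : K} (ht : t < 1) (h : d ≤ t * (s + d)) :
    d ≤ t / (1 - t) * s := by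
  rw [div_mul_eq_mul_div, le_div_iff₀ (sub_pos.2 ht)]
  linarith

section PseudoMetricSpace

variable {X : Type*} [PseudoMetricSpace X]

lemma dist_add_dist_le_two_mul_dist_add_dist_add_dist (x y x' y' : X) :
    dist x x' + dist y y' ≤ 2 * dist x x' + dist x y + dist x' y' := by
  linarith [dist_triangle4 y x x' y', dist_comm x y]

lemma dist_add_dist_swap_le_two_mul_dist_add_dist_add_dist (x y x' y' : X) :
    dist x y' + dist y x' ≤ 2 * dist x x' + dist x y + dist x' y' := by
  linarith [dist_triangle x x' y', dist_triangle y x x', dist_comm x y]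

lemma dist_le_max_div_one_sub_mul {α β γ : ℝ} (hα : α ∈ Ico (0 : ℝ) 1) (hβ : β ∈ Ico (0 : ℝ) 1)
    (hγ : γ ∈ Ico (0 : ℝ) 1) {x y x' y' : X}
    (h : dist x' y' ≤ α * (dist x y + dist x' y') ∨
      dist x' y' ≤ β * (dist x x' + dist y y') ∨
      dist x' y' ≤ γ * (dist x y' + dist y x')) :
    dist x' y' ≤
      max (α / (1 - α)) (max (β / (1 - β)) (γ / (1 - γ))) * (2 * dist x x' + dist x y) := by
  set s := 2 * dist x x' + dist x y
  have s_nonneg : 0 ≤ s := by positivity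
  have le_of_bracket_le {t b η : ℝ} (ht : t ∈ Ico (0 : ℝ) 1) (hη : t / (1 - t) ≤ η)
      (hb : b ≤ s + dist x' y') (htb : dist x' y' ≤ t * b) : dist x' y' ≤ η * s :=
    calc dist x' y' ≤ t / (1 - t) * s :=
          le_div_one_sub_mul_of_le_mul_add_s18 ht.2 (htb.trans (mul_le_mul_of_nonneg_left hb ht.1))
      _ ≤ η * s := mul_le_mul_of_nonneg_right hη s_nonneg
  rcases h with h | h | h
  · have bracket_le : dist x y + dist x' y' ≤ s + dist x' y' :=
      add_le_add_left (le_add_of_nonneg_left (by positivity)) _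
    exact le_of_bracket_le hα (le_max_left _ _) bracket_le h
  · exact le_of_bracket_le hβ ((le_max_left _ _).trans (le_max_right _ _))
      (dist_add_dist_le_two_mul_dist_add_dist_add_dist x y x' y') h
  · exact le_of_bracket_le hγ ((le_max_right _ _).trans (le_max_right _ _))
      (dist_add_dist_swap_le_two_mul_dist_add_dist_add_dist x y x' y') h

end PseudoMetricSpace

theorem stmt_18_general {X : Type*} [PseudoMetricSpace X] (T : X → X) {α β γ : ℝ}
    (hα : α ∈ Ico (0 : ℝ) 1) (hβ : β ∈ Ico (0 : ℝ) 1) (hγ : γ ∈ Ico (0 : ℝ) 1)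
    (hcontr : ∀ x y : X,
      dist (T x) (T y) ≤ α * (dist x y + dist (T x) (T y)) ∨
      dist (T x) (T y) ≤ β * (dist x (T x) + dist y (T y)) ∨
      dist (T x) (T y) ≤ γ * (dist x (T y) + dist y (T x))) (x y : X) :
    dist (T x) (T y) ≤
        2 * max (α / (1 - α)) (max (β / (1 - β)) (γ / (1 - γ))) * dist x (T x) +
          max (α / (1 - α)) (max (β / (1 - β)) (γ / (1 - γ))) * dist x y ∧
      dist (T x) (T y) ≤
        2 * max (α / (1 - α)) (max (β / (1 - β)) (γ / (1 - γ))) * dist y (T y) +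
          max (α / (1 - α)) (max (β / (1 - β)) (γ / (1 - γ))) * dist x y := by
  have bound_x := dist_le_max_div_one_sub_mul hα hβ hγ (hcontr x y)
  have bound_y := dist_le_max_div_one_sub_mul hα hβ hγ (hcontr y x)
  rw [dist_comm (T y), dist_comm y x] at bound_y
  constructor <;> linarith

/-- For a Mohsenialhosseini-type operator on a G-metric space, with
`η = max{α/(1−α), β/(1−β), γ/(1−γ)}`, both
`D(Tx,Ty) ≤ 2η·D(x,Tx) + η·D(x,y)` and `D(Tx,Ty) ≤ 2η·D(y,Ty) + η·D(x,y)` hold. -/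
theorem stmt_18 {X : Type*} [Nonempty X]
    (G : X → X → X → ℝ) (hG : IsGMetric G)
    (T : X → X) (α β γ : ℝ)
    (hα : α ∈ Set.Ico (0 : ℝ) (1/2)) (hβ : β ∈ Set.Ico (0 : ℝ) (1/2))
    (hγ : γ ∈ Set.Ico (0 : ℝ) (1/2))
    (hcontr : ∀ x y : X,
      gD G (T x) (T y) ≤ α * (gD G x y + gD G (T x) (T y)) ∨
      gD G (T x) (T y) ≤ β * (gD G x (T x) + gD G y (T y)) ∨
      gD G (T x) (T y) ≤ γ * (gD G x (T y) + gD G y (T x))) :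
    ∀ x y : X,
      gD G (T x) (T y) ≤
        2 * max (α / (1 - α)) (max (β / (1 - β)) (γ / (1 - γ))) * gD G x (T x) +
          max (α / (1 - α)) (max (β / (1 - β)) (γ / (1 - γ))) * gD G x y ∧
      gD G (T x) (T y) ≤
        2 * max (α / (1 - α)) (max (β / (1 - β)) (γ / (1 - γ))) * gD G y (T y) +
          max (α / (1 - α)) (max (β / (1 - β)) (γ / (1 - γ))) * gD G x y := by
  let := hG.metricSpace
  have Ico_half_subset : Ico (0 : ℝ) (1 / 2) ⊆ Ico 0 1 := Ico_subset_Ico_right (by norm_num)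
  exact stmt_18_general T (Ico_half_subset hα) (Ico_half_subset hβ) (Ico_half_subset hγ) hcontr
end
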